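/- arXiv:1007.2239 — 2 statements merged into one kernel-verified Lean document; each statement's English description precedes it below -/
import Mathlib

section
/- Let n ≥ 2 and m ≥ 2 be integers and let R_m = ℤ[x_1, ..., x_m]. If v ≥ 1 is an integer such that every element of the subring J(2^n, R_m) of R_m generated by all 2^n-th powers can be written as a signed sum of v 2^n-th powers, i.e. in the form Σ_{i=1}^v ε_i f_i^{2^n} with f_i ∈ R_m and ε_i ∈ {+1, −1}, then v · m ≥ m(m−1)/2; in particular v ≥ (m−1)/2. -/
open MvPolynomial in
/-- Modulo 2, a `2^r`-th power is the expansion. -/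
lemma aux_expand_zmod {m : ℕ} (r : ℕ) (f : MvPolynomial (Fin m) (ZMod 2)) :
    expand (2 ^ r) f = f ^ (2 ^ r) := by
  induction r with
  | zero => simp
  | succ r ih => rw [pow_succ', expand_mul, ih, expand_zmod, ← pow_mul, mul_comm]

open MvPolynomial in
lemma aux_sq {m : ℕ} (r : ℕ) (g : MvPolynomial (Fin m) ℤ) :
    ∃ c : MvPolynomial (Fin m) ℤ,
      g ^ (2 * 2 ^ r) = expand (2 ^ r) (g ^ 2) + C 4 * c := by
  have h : C ((2 : ℕ) : ℤ) ∣ g ^ (2 ^ r) - expand (2 ^ r) g := by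
    rw [C_dvd_iff_zmod, map_sub, sub_eq_zero, map_expand, map_pow, aux_expand_zmod]
  obtain ⟨c, hc⟩ := h
  refine ⟨expand (2 ^ r) g * c + c ^ 2, ?_⟩
  have h1 : g ^ (2 ^ r) = expand (2 ^ r) g + 2 * c := by
    have : (C ((2 : ℕ) : ℤ) : MvPolynomial (Fin m) ℤ) = 2 := by simp
    rw [← this, ← hc]; ring
  have h4 : (C 4 : MvPolynomial (Fin m) ℤ) = 4 := map_ofNat C 4
  rw [mul_comm, pow_mul, h1, map_pow, h4]
  ring

open MvPolynomial in
lemma aux_coeff {m : ℕ} (i j : Fin m) (hij : i ≠ j) (f : MvPolynomial (Fin m) ℤ) :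
    coeff (Finsupp.single j 1 + Finsupp.single i 1) f
      = constantCoeff (pderiv j (pderiv i f)) := by
  rw [constantCoeff_eq, coeff_pderiv, coeff_pderiv]
  simp [hij.symm]

open MvPolynomial in
lemma aux_pow {m : ℕ} (i j : Fin m) (N : ℕ) (g : MvPolynomial (Fin m) ℤ) :
    constantCoeff (pderiv j (pderiv i (g ^ (N + 2))))
      = (N + 2) * constantCoeff g ^ (N + 1) * constantCoeff (pderiv j (pderiv i g))
        + (N + 2) * (N + 1) * constantCoeff g ^ N * constantCoeff (pderiv i g)
          * constantCoeff (pderiv j g) := by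
  rw [pderiv_pow, pderiv_mul, pderiv_mul, pderiv_pow]
  have : pderiv j (((N + 2 : ℕ) : MvPolynomial (Fin m) ℤ)) = 0 := by
    simpa using (pderiv_C (R := ℤ) (a := ((N + 2 : ℕ) : ℤ)) (i := j))
  have h2 : constantCoeff (2 : MvPolynomial (Fin m) ℤ) = 2 := map_ofNat constantCoeff 2
  rw [this]
  simp [h2]
  ring

open MvPolynomial in
/-- The linear functional separating the parameters. -/
noncomputable def auxPhi {m : ℕ} (i j : Fin m) (q : ℕ) : MvPolynomial (Fin m) ℤ →+ ℤ where
  toFun f := (2 * q : ℤ) * coeff (q • (Finsupp.single j 1 + Finsupp.single i 1)) f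
    + 2 * constantCoeff (pderiv j (pderiv i f))
  map_zero' := by simp
  map_add' f g := by simp only [coeff_add, map_add]; ring

open MvPolynomial in
lemma aux_phi {m : ℕ} (i j : Fin m) (hij : i ≠ j) (r : ℕ) (g : MvPolynomial (Fin m) ℤ) :
    ∃ c : ℤ, auxPhi i j (2 ^ (r + 1)) (g ^ (2 ^ (r + 2))) =
      4 * 2 ^ (r + 1) * (((1 + constantCoeff g) * constantCoeff (pderiv i g)) *
        ((1 + constantCoeff g) * constantCoeff (pderiv j g)) + 2 * c) := by
  obtain ⟨d, hd⟩ := aux_sq (r + 1) g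
  have hB : coeff (2 ^ (r + 1) • (Finsupp.single j 1 + Finsupp.single i 1)) (g ^ (2 ^ (r + 2)))
      = 2 * constantCoeff g * constantCoeff (pderiv j (pderiv i g))
        + 2 * constantCoeff (pderiv i g) * constantCoeff (pderiv j g)
        + 4 * coeff (2 ^ (r + 1) • (Finsupp.single j 1 + Finsupp.single i 1)) d := by
    rw [show 2 ^ (r + 2) = 2 * 2 ^ (r + 1) by ring, hd, coeff_add, coeff_C_mul,
      coeff_expand_smul _ (by positivity), aux_coeff i j hij]
    have := aux_pow i j 0 g
    simp only [zero_add] at this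
    rw [this]
    push_cast
    ring
  obtain ⟨N, hN⟩ : ∃ N, 2 ^ (r + 2) = 2 * N + 4 := by
    refine ⟨2 * 2 ^ r - 2, ?_⟩
    have : 1 ≤ 2 ^ r := Nat.one_le_two_pow
    rw [pow_add]; omega
  have hNq : (2 * 2 ^ (r + 1) : ℤ) = 2 * N + 4 := by
    have := congrArg (Nat.cast : ℕ → ℤ) hN
    push_cast at this
    rw [← this]; ring
  have hA := aux_pow i j (2 * N + 2) g
  rw [show 2 * N + 2 + 2 = 2 ^ (r + 2) by omega] at hA
  simp only [auxPhi, AddMonoidHom.coe_mk, ZeroHom.coe_mk]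
  rw [hB, hA]
  generalize coeff (2 ^ (r + 1) • (Finsupp.single j 1 + Finsupp.single i 1)) d = dd
  generalize constantCoeff g = a
  generalize constantCoeff (pderiv j (pderiv i g)) = e
  generalize constantCoeff (pderiv i g) = x
  generalize constantCoeff (pderiv j g) = y
  -- powers of `a` of positive exponent have the parity of `a`
  have hp : ∀ s : ℕ, ∃ c : ℤ, a ^ (s + 1) = a + 2 * c := by
    intro s
    have : (2 : ℤ) ∣ a ^ (s + 1) - a := by
      rcases Int.even_or_odd a with ha | ha
      · exact ((ha.pow_of_ne_zero (Nat.succ_ne_zero s)).sub ha).two_dvd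
      · exact ((ha.pow).sub_odd ha).two_dvd
    obtain ⟨c, hc⟩ := this
    exact ⟨c, by linarith⟩
  obtain ⟨c1, h1⟩ := hp (2 * N + 2)
  obtain ⟨c2, h2⟩ := hp (2 * N + 1)
  rw [h1, show 2 * N + 2 = 2 * N + 1 + 1 by ring, h2]
  push_cast
  obtain ⟨u, hu⟩ : ∃ u : ℤ, a * a = a + 2 * u := by
    obtain ⟨c, hc⟩ := hp 1
    exact ⟨c, by rw [← hc]; ring⟩
  have hq : (2 ^ (r + 1) : ℤ) = N + 2 := by linarith
  rw [hq]
  refine ⟨a * e + dd + c1 * e + (N + 1) * a * x * y + (2 * N + 3) * c2 * x * y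
    - a * x * y - u * x * y, ?_⟩
  linear_combination (-4 * (N + 2) * x * y : ℤ) * hu

/-- If every element of the subring of `ℤ[x₁,…,xₘ]` generated by `2^n`-th powers is a
signed sum of `v` `2^n`-th powers, then `v·m ≥ m(m-1)/2`; in particular `v ≥ (m-1)/2`. -/
theorem stmt_1 (n m v : ℕ) (hn : 2 ≤ n) (hm : 2 ≤ m) (hv : 1 ≤ v)
    (h : ∀ f ∈ Subring.closure (Set.range fun g : MvPolynomial (Fin m) ℤ => g ^ (2 ^ n)),
      ∃ (g : Fin v → MvPolynomial (Fin m) ℤ) (ε : Fin v → MvPolynomial (Fin m) ℤ),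
        (∀ i, ε i = 1 ∨ ε i = -1) ∧ f = ∑ i, ε i * g i ^ (2 ^ n)) :
    2 * (v * m) ≥ m * (m - 1) ∧ 2 * v ≥ m - 1 := by
  suffices key : 2 * (v * m) ≥ m * (m - 1) by
    refine ⟨key, ?_⟩
    have : m * (m - 1) ≤ m * (2 * v) := by
      rw [show m * (2 * v) = 2 * (v * m) by ring]; exact key
    exact Nat.le_of_mul_le_mul_left this (by omega)
  obtain ⟨r, rfl⟩ : ∃ r, n = r + 2 := ⟨n - 2, by omega⟩
  classical
  let P := Σ i : Fin m, Fin i.1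
  let s : P → Fin m := fun p => ⟨p.2.1, p.2.2.trans p.1.2⟩
  have hs : ∀ p : P, s p < p.1 := fun p => p.2.2
  have hinj : ∀ p p' : P, p.1 = p'.1 → s p = s p' → p = p' := by
    rintro ⟨i, a⟩ ⟨i', a'⟩ h1 h2
    dsimp only at h1
    subst h1
    have : a.1 = a'.1 := congrArg (fun x : Fin m => x.1) h2
    rw [Fin.ext this]
  let F : (P → ZMod 2) → MvPolynomial (Fin m) ℤ := fun t =>
    ∑ p : P, if t p = 1 then (MvPolynomial.X p.1 + MvPolynomial.X (s p)) ^ (2 ^ (r + 2)) else 0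
  have hF : ∀ t, F t ∈ Subring.closure
      (Set.range fun g : MvPolynomial (Fin m) ℤ => g ^ (2 ^ (r + 2))) := by
    intro t
    refine Subring.sum_mem _ fun p _ => ?_
    split_ifs
    · exact Subring.subset_closure ⟨_, rfl⟩
    · exact Subring.zero_mem _
  choose g ε hε hg using fun t => h (F t) (hF t)
  let b : (P → ZMod 2) → Fin v → Fin m → ℤ := fun t l i =>
    (1 + MvPolynomial.constantCoeff (g t l)) *
      MvPolynomial.constantCoeff (MvPolynomial.pderiv i (g t l))
  have hmain : ∀ (t : P → ZMod 2) (p : P),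
      t p = ∑ l, (b t l p.1 : ZMod 2) * (b t l (s p) : ZMod 2) := by
    intro t p
    have hne : p.1 ≠ s p := (hs p).ne'
    let Φ := auxPhi p.1 (s p) (2 ^ (r + 1))
    have hR : ∃ c : ℤ, Φ (F t) = 4 * 2 ^ (r + 1) * c ∧
        (c : ZMod 2) = ∑ l, (b t l p.1 : ZMod 2) * (b t l (s p) : ZMod 2) := by
      have : ∀ l, ∃ c : ℤ, Φ (ε t l * g t l ^ (2 ^ (r + 2))) = 4 * 2 ^ (r + 1) * c ∧
          (c : ZMod 2) = (b t l p.1 : ZMod 2) * (b t l (s p) : ZMod 2) := by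
        intro l
        obtain ⟨c, hc⟩ := aux_phi p.1 (s p) hne r (g t l)
        have h2 : (2 : ZMod 2) = 0 := rfl
        rcases hε t l with h1 | h1
        · refine ⟨b t l p.1 * b t l (s p) + 2 * c, ?_, ?_⟩
          · rw [h1, one_mul]; exact hc
          · push_cast; rw [h2]; ring
        · refine ⟨-(b t l p.1 * b t l (s p) + 2 * c), ?_, ?_⟩
          · rw [h1, neg_one_mul, map_neg, mul_neg]; exact congrArg Neg.neg hc
          · push_cast; rw [h2, ZMod.neg_eq_self_mod_two]; ring
      choose c hc1 hc2 using this
      refine ⟨∑ l, c l, ?_, ?_⟩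
      · rw [hg t, map_sum, Finset.mul_sum]
        exact Finset.sum_congr rfl fun l _ => hc1 l
      · push_cast
        exact Finset.sum_congr rfl fun l _ => hc2 l
    have hL : ∃ c : ℤ, Φ (F t) = 4 * 2 ^ (r + 1) * c ∧ (c : ZMod 2) = t p := by
      have : ∀ p' : P, ∃ c : ℤ, Φ (if t p' = 1 then
            (MvPolynomial.X p'.1 + MvPolynomial.X (s p')) ^ (2 ^ (r + 2)) else 0)
            = 4 * 2 ^ (r + 1) * c ∧ (c : ZMod 2) = if p' = p then t p else 0 := by
        intro p'
        by_cases ht : t p' = 1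
        · rw [if_pos ht]
          obtain ⟨c, hc⟩ := aux_phi p.1 (s p) hne r
            (MvPolynomial.X p'.1 + MvPolynomial.X (s p'))
          refine ⟨_, hc, ?_⟩
          have h2 : (2 : ZMod 2) = 0 := rfl
          push_cast
          rw [h2]
          have e1 := hs p
          have e2 := hs p'
          by_cases hpp : p' = p
          · subst hpp
            rw [if_pos rfl, ht]
            simp [hne, hne.symm]
          · rw [if_neg hpp]
            by_cases k1 : p'.1 = p.1
            · have k2 : s p' ≠ s p := fun h' => hpp (hinj _ _ k1 h')
              have k3 : p'.1 ≠ s p := by rw [k1]; exact hne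
              simp [MvPolynomial.pderiv_X_of_ne k2, MvPolynomial.pderiv_X_of_ne k3]
            · by_cases k4 : s p' = p.1
              · have k2 : s p' ≠ s p := by rw [k4]; exact hne
                have k3 : p'.1 ≠ s p := by
                  intro h'; rw [← h', ← k4] at e1; exact absurd e1 e2.asymm
                simp [MvPolynomial.pderiv_X_of_ne k2, MvPolynomial.pderiv_X_of_ne k3]
              · simp [MvPolynomial.pderiv_X_of_ne k1, MvPolynomial.pderiv_X_of_ne k4]
        · rw [if_neg ht]
          refine ⟨0, by simp, ?_⟩
          have h01 : ∀ x : ZMod 2, x ≠ 1 → x = 0 := by decide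
          split_ifs with hpp
          · subst hpp; rw [h01 _ ht]; simp
          · simp
      choose c hc1 hc2 using this
      refine ⟨∑ l, c l, ?_, ?_⟩
      · rw [map_sum, Finset.mul_sum]
        exact Finset.sum_congr rfl fun l _ => hc1 l
      · push_cast
        rw [Finset.sum_congr rfl fun l _ => hc2 l, Finset.sum_ite_eq']
        exact if_pos (Finset.mem_univ p)
    obtain ⟨c, hc, hc'⟩ := hR
    obtain ⟨d, hd, hd'⟩ := hL
    have : d = c := by
      have h3 : (4 * 2 ^ (r + 1) : ℤ) ≠ 0 := by positivity
      exact mul_left_cancel₀ h3 (hd.symm.trans hc)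
    rw [← hd', this, hc']
  have hI : Function.Injective
      (fun (t : P → ZMod 2) (li : Fin v × Fin m) => (b t li.1 li.2 : ZMod 2)) := by
    intro t t' htt
    funext p
    rw [hmain t p, hmain t' p]
    refine Finset.sum_congr rfl fun l _ => ?_
    have e1 := congrFun htt (l, p.1)
    have e2 := congrFun htt (l, s p)
    dsimp only at e1 e2
    rw [e1, e2]
  have hcard := Fintype.card_le_of_injective _ hI
  simp only [Fintype.card_fun, ZMod.card, Fintype.card_prod, Fintype.card_fin] at hcard
  have hle := (Nat.pow_le_pow_iff_right (by norm_num : 1 < 2)).1 hcard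
  have hP : Fintype.card P = ∑ i ∈ Finset.range m, i := by
    simp only [P, Fintype.card_sigma, Fintype.card_fin]
    exact Fin.sum_univ_eq_sum_range (fun i => i) m
  have := Finset.sum_range_id_mul_two m
  omega
end

section
/- Let n ≥ 2 be an integer. For every integer v ≥ 1 there exist an integer m ≥ 2 and an element g of the subring J(2^n, R_m) of R_m = ℤ[x_1, ..., x_m] generated by all 2^n-th powers, such that g cannot be written in the form Σ_{t=1}^v ε_t f_t^{2^n} with f_t ∈ R_m and ε_t ∈ {+1, −1}. In fact any m with m − 1 > 2v works. -/
open MvPolynomial in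
/-- The coefficient functional `f ↦ (∂_a ∂_b f)(0)`. -/
theorem aux_dd {m : ℕ} (a b : Fin m) (f : MvPolynomial (Fin m) ℤ) (k : ℕ) :
    constantCoeff (pderiv a (pderiv b (f ^ (k + 2)))) =
      (k + 2) * (constantCoeff f ^ k * ((k + 1) * (constantCoeff (pderiv a f) *
        constantCoeff (pderiv b f)) +
        constantCoeff f * constantCoeff (pderiv a (pderiv b f)))) := by
  have h1 : pderiv b (f ^ (k + 2)) = ((k : MvPolynomial (Fin m) ℤ) + 2) * f ^ (k + 1) * pderiv b f := by
    rw [pderiv_pow]; push_cast; simp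
  have h2 : pderiv a (f ^ (k + 1)) = ((k : MvPolynomial (Fin m) ℤ) + 1) * f ^ k * pderiv a f := by
    rw [pderiv_pow]; push_cast; simp
  have h3 : ((k : MvPolynomial (Fin m) ℤ) + 2) = C ((k : ℤ) + 2) := by simp
  rw [h1, h3, mul_assoc, pderiv_C_mul, pderiv_mul, h2]
  have h4 : constantCoeff (2 : MvPolynomial (Fin m) ℤ) = 2 := map_ofNat _ 2
  simp [h4]
  left
  ring

open MvPolynomial in
theorem aux_expand2 {m : ℕ} (n : ℕ) (f : MvPolynomial (Fin m) ℤ) :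
    ∃ r, f ^ (2 ^ n) = expand (2 ^ n) f + 2 * r := by
  have h : (C (2 : ℤ)) ∣ f ^ (2 ^ n) - expand (2 ^ n) f := by
    have := (MvPolynomial.C_dvd_iff_zmod 2 (f ^ (2 ^ n) - expand (2 ^ n) f)).2 (by
      rw [map_sub, map_pow, map_expand, sub_eq_zero]
      generalize (map (Int.castRingHom (ZMod 2)) f) = p
      induction n with
      | zero => simp
      | succ n ih => rw [pow_succ, pow_mul, ih, ← expand_zmod, mul_comm, expand_mul])
    exact_mod_cast this
  obtain ⟨r, hr⟩ := h
  refine ⟨r, ?_⟩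
  have : (C (2 : ℤ) : MvPolynomial (Fin m) ℤ) = 2 := by simp
  rw [this] at hr
  linear_combination hr

open MvPolynomial in
theorem aux_expand4 {m : ℕ} (n : ℕ) (f : MvPolynomial (Fin m) ℤ) :
    (4 : MvPolynomial (Fin m) ℤ) ∣ f ^ (2 ^ (n + 1)) - expand (2 ^ n) (f ^ 2) := by
  obtain ⟨r, hr⟩ := aux_expand2 n f
  refine ⟨expand (2 ^ n) f * r + r ^ 2, ?_⟩
  rw [pow_succ 2 n, pow_mul, hr, map_pow]
  ring

open MvPolynomial in
theorem aux_dvd {m : ℕ} (n : ℕ) (f : MvPolynomial (Fin m) ℤ)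
    (h : (4 : MvPolynomial (Fin m) ℤ) ∣ expand (2 ^ n) f) :
    (4 : MvPolynomial (Fin m) ℤ) ∣ f := by
  have e : (4 : MvPolynomial (Fin m) ℤ) = C 4 := by simp
  rw [e, C_dvd_iff_dvd_coeff] at h ⊢
  intro d
  have := h ((2 ^ n) • d)
  rwa [coeff_expand_smul _ (by positivity)] at this

open MvPolynomial in
theorem aux_main (n : ℕ) (hn : 2 ≤ n) (v m : ℕ) (hm : 2 * v < m - 1) :
    ∃ g ∈ Subring.closure (Set.range fun h : MvPolynomial (Fin m) ℤ => h ^ (2 ^ n)),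
      ¬ ∃ (f : Fin v → MvPolynomial (Fin m) ℤ) (ε : Fin v → MvPolynomial (Fin m) ℤ),
        (∀ t, ε t = 1 ∨ ε t = -1) ∧ g = ∑ t, ε t * f t ^ (2 ^ n) := by
  obtain ⟨N, rfl⟩ : ∃ N, n = N + 1 := ⟨n - 1, by omega⟩
  obtain ⟨K, hK⟩ : ∃ K, 2 ^ (N + 1) = (2 * K + 2) + 2 := by
    obtain ⟨M, rfl⟩ : ∃ M, N = M + 1 := ⟨N - 1, by omega⟩
    have : 1 ≤ 2 ^ M := Nat.one_le_two_pow
    exact ⟨2 * 2 ^ M - 2, by rw [pow_succ, pow_succ]; omega⟩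
  let x : Fin (v + 1) → Fin m := fun i => ⟨i, by omega⟩
  let y : Fin (v + 1) → Fin m := fun i => ⟨v + 1 + i, by omega⟩
  have hxx : ∀ i j, x i = x j ↔ i = j := by intro i j; simp [x, Fin.ext_iff]
  have hyy : ∀ i j, y i = y j ↔ i = j := by intro i j; simp [y, Fin.ext_iff]
  have hxy : ∀ i j, x i ≠ y j := by intro i j; simp [x, y]; omega
  let L : Fin (v + 1) → MvPolynomial (Fin m) ℤ := fun i => X (x i) + X (y i)
  have hL0 : ∀ i, constantCoeff (L i) = 0 := by intro i; simp [L]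
  have hLx : ∀ i j, constantCoeff (pderiv (x i) (L j)) = if j = i then 1 else 0 := by
    intro i j
    simp [L, pderiv_X, Pi.single_apply, hxx, (hxy _ _), (hxy _ _).symm, apply_ite]
  have hLy : ∀ i j, constantCoeff (pderiv (y i) (L j)) = if j = i then 1 else 0 := by
    intro i j
    simp [L, pderiv_X, Pi.single_apply, hyy, (hxy _ _), (hxy _ _).symm, apply_ite]
  refine ⟨∑ i, L i ^ (2 ^ (N + 1)), Subring.sum_mem _ fun i _ =>
    Subring.subset_closure ⟨L i, rfl⟩, ?_⟩
  rintro ⟨f, ε, hε, hg⟩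
  have : ∃ e : Fin v → ℤ, ∀ t, ε t = C (e t) ∧ (e t : ZMod 2) = 1 := by
    have : ∀ t, ∃ e : ℤ, ε t = C e ∧ (e : ZMod 2) = 1 := by
      intro t
      rcases hε t with h | h
      · exact ⟨1, by simp [h], by simp⟩
      · exact ⟨-1, by simp [h], by decide⟩
    choose e he using this
    exact ⟨e, he⟩
  obtain ⟨e, he⟩ := this
  simp only [(he _).1] at hg
  -- first relation
  have R1 : ∀ i j, ∑ t, (((constantCoeff (f t) : ℤ) : ZMod 2) *
      ((constantCoeff (pderiv (x i) (f t)) : ℤ) * (constantCoeff (pderiv (y j) (f t)) : ℤ)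
        + (constantCoeff (pderiv (x i) (pderiv (y j) (f t))) : ℤ))) = 0 := by
    intro i j
    have h := congrArg (fun p => constantCoeff (pderiv (x i) (pderiv (y j) p))) hg
    simp only [map_sum, pderiv_C_mul, hK, aux_dd, hL0, map_mul, constantCoeff_C] at h
    have h' : ((2 * K + 2 : ℕ) + 2 : ℤ) * ∑ t, e t * (constantCoeff (f t) ^ (2 * K + 2) *
        (((2 * K + 2 : ℕ) + 1) * (constantCoeff (pderiv (x i) (f t)) *
        constantCoeff (pderiv (y j) (f t))) +
        constantCoeff (f t) * constantCoeff (pderiv (x i) (pderiv (y j) (f t))))) = 0 := by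
      rw [Finset.mul_sum]
      refine Eq.trans (Finset.sum_congr rfl fun t _ => ?_) (h.symm.trans ?_)
      · ring
      · simp
    have h'' := (mul_eq_zero.1 h').resolve_left (by positivity)
    have h3 := congrArg (Int.cast : ℤ → ZMod 2) h''
    push_cast [(he _).2] at h3
    rw [← h3]
    refine Finset.sum_congr rfl fun t _ => ?_
    generalize ((constantCoeff (f t) : ℤ) : ZMod 2) = c
    generalize ((constantCoeff (pderiv (x i) (f t)) : ℤ) : ZMod 2) = p
    generalize ((constantCoeff (pderiv (y j) (f t)) : ℤ) : ZMod 2) = q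
    generalize ((constantCoeff (pderiv (x i) (pderiv (y j) (f t))) : ℤ) : ZMod 2) = s
    have h2 : (2 : ZMod 2) = 0 := by decide
    have hc : c ^ (2 * K + 2) = c := by
      have : c = 0 ∨ c = 1 := by revert c; decide
      rcases this with h | h <;> simp [h]
    have hc2 : c * c = c := by clear hc; revert c; decide
    rw [hc, h2]
    linear_combination (-s) * hc2
  -- second relation
  have R2 : ∀ i j, ∑ t, (((constantCoeff (f t) : ℤ) : ZMod 2) *
        (constantCoeff (pderiv (x i) (pderiv (y j) (f t))) : ℤ) +
      (constantCoeff (pderiv (x i) (f t)) : ℤ) * (constantCoeff (pderiv (y j) (f t)) : ℤ))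
        = if i = j then 1 else 0 := by
    have hd : (4 : MvPolynomial (Fin m) ℤ) ∣ ∑ t, C (e t) * f t ^ 2 - ∑ i, L i ^ 2 := by
      apply aux_dvd N
      have h1 : (4 : MvPolynomial (Fin m) ℤ) ∣
          ∑ i, (L i ^ (2 ^ (N + 1)) - expand (2 ^ N) (L i ^ 2)) :=
        Finset.dvd_sum fun i _ => aux_expand4 N (L i)
      have h2 : (4 : MvPolynomial (Fin m) ℤ) ∣
          ∑ t, C (e t) * (f t ^ (2 ^ (N + 1)) - expand (2 ^ N) (f t ^ 2)) :=
        Finset.dvd_sum fun i _ => (aux_expand4 N (f i)).mul_left _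
      have h3 := dvd_sub h1 h2
      convert h3 using 1
      simp only [mul_sub, Finset.sum_sub_distrib, map_sub, map_sum, map_mul, expand_C, hg]
      ring
    obtain ⟨r, hr⟩ := hd
    intro i j
    have h := congrArg (fun p => constantCoeff (pderiv (x i) (pderiv (y j) p))) hr
    have e4 : (4 : MvPolynomial (Fin m) ℤ) = C 4 := by simp
    have dd2 : ∀ p : MvPolynomial (Fin m) ℤ,
        constantCoeff (pderiv (x i) (pderiv (y j) (p ^ 2))) = _ := fun p => aux_dd (x i) (y j) p 0
    simp only [map_sub, map_sum, pderiv_C_mul, dd2, e4, hL0, hLx, hLy, map_mul,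
      constantCoeff_C] at h
    have h' : ∑ t, e t * (constantCoeff (pderiv (x i) (f t)) *
        constantCoeff (pderiv (y j) (f t)) +
        constantCoeff (f t) * constantCoeff (pderiv (x i) (pderiv (y j) (f t)))) -
        (if i = j then 1 else 0) = 2 * constantCoeff (pderiv (x i) (pderiv (y j) r)) := by
      have : (2 : ℤ) ≠ 0 := by norm_num
      apply mul_left_cancel₀ this
      rw [← mul_assoc, mul_sub, Finset.mul_sum]
      refine Eq.trans ?_ h
      congr 1
      · refine Finset.sum_congr rfl fun t _ => ?_
        push_cast; ring
      · simp [eq_comm]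
    have h3 := congrArg (Int.cast : ℤ → ZMod 2) h'
    have h2 : (2 : ZMod 2) = 0 := by decide
    push_cast [(he _).2, h2] at h3
    rw [zero_mul, sub_eq_zero] at h3
    rw [← h3]
    refine Finset.sum_congr rfl fun t _ => ?_
    ring
  -- rank contradiction
  let U : Matrix (Fin (v + 1)) (Fin v) (ZMod 2) := fun i t =>
    (1 - ((constantCoeff (f t) : ℤ) : ZMod 2)) * (constantCoeff (pderiv (x i) (f t)) : ℤ)
  let W : Matrix (Fin v) (Fin (v + 1)) (ZMod 2) := fun t j =>
    (constantCoeff (pderiv (y j) (f t)) : ℤ)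
  have hUW : U * W = 1 := by
    ext i j
    rw [Matrix.mul_apply, Matrix.one_apply, ← R2 i j, ← sub_zero (∑ t, (_ + _)), ← R1 i j,
      ← Finset.sum_sub_distrib]
    refine Finset.sum_congr rfl fun t _ => ?_
    simp only [U, W]
    ring
  have h1 := Matrix.rank_mul_le_left U W
  rw [hUW, Matrix.rank_one] at h1
  have h2 := Matrix.rank_le_width U
  simp at h1
  omega

/-- For `n ≥ 2` and any `v ≥ 1`, there exist `m ≥ 2` and an element `g` of the subring of
`ℤ[x₁,…,xₘ]` generated by all `2^n`-th powers which is not a signed sum of `v` `2^n`-th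
powers; in fact any `m` with `m - 1 > 2v` works. -/
theorem stmt_15 (n : ℕ) (hn : 2 ≤ n) :
    ∀ v : ℕ, 1 ≤ v →
      (∃ m : ℕ, 2 ≤ m ∧
        ∃ g ∈ Subring.closure (Set.range fun h : MvPolynomial (Fin m) ℤ => h ^ (2 ^ n)),
          ¬ ∃ (f : Fin v → MvPolynomial (Fin m) ℤ) (ε : Fin v → MvPolynomial (Fin m) ℤ),
            (∀ t, ε t = 1 ∨ ε t = -1) ∧ g = ∑ t, ε t * f t ^ (2 ^ n)) ∧
      (∀ m : ℕ, 2 * v < m - 1 →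
        ∃ g ∈ Subring.closure (Set.range fun h : MvPolynomial (Fin m) ℤ => h ^ (2 ^ n)),
          ¬ ∃ (f : Fin v → MvPolynomial (Fin m) ℤ) (ε : Fin v → MvPolynomial (Fin m) ℤ),
            (∀ t, ε t = 1 ∨ ε t = -1) ∧ g = ∑ t, ε t * f t ^ (2 ^ n)) := by
  intro v _
  exact ⟨⟨2 * v + 2, by omega, aux_main n hn v _ (by omega)⟩,
    fun m hm => aux_main n hn v m hm⟩
end
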